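/- The metric space (I_α, d_α) is path-connected and separable. -/

import Mathlib

/-!
Both halves rest on the same observation (`exists_fin_blocks`): the blocks of an interval
partition carry its whole length, so finitely many of them, listed from left to right, carry all
of it up to `ε`.

*Path-connectedness.* Multiplying all endpoints by `c > 0` multiplies masses by `c` and
diversities by `c ^ a` (`hasDiversity_scale`). Matching finitely many large blocks with their own
dilates shows that `c ↦ scale c β` is `d_α`-continuous on `[0, ∞)` (`dA_scale_lt`), where
`scale 0 β` is the empty partition. Any two partitions are thus joined through the empty one.

*Separability.* Fix an accuracy `ε` and describe a partition by the number of blocks selected as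
above, together with rational approximations of their masses, of their diversities and of the total
diversity (`Describes`). Every partition has a description, there are countably many descriptions,
and two partitions with the same description are close, the selected blocks being matched in
order (`dA_le_of_describes`). Choosing one partition for each description that occurs gives a
countable dense set; neither a triangle inequality nor an explicit family of partitions is needed.
-/

open MeasureTheory Filter Topology Set

/-- An interval partition of `[0, L]`: a set of disjoint open subintervals whose
complement in `[0, L]` is Lebesgue-null. A block is encoded by its endpoint pair
`(a, b)` with `a < b`, representing the open interval `(a, b)`. -/
structure IntervalPartition where
  length : ℝ
  length_nonneg : 0 ≤ length
  blocks : Set (ℝ × ℝ)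
  blocks_lt : ∀ p ∈ blocks, p.1 < p.2
  blocks_sub : ∀ p ∈ blocks, 0 ≤ p.1 ∧ p.2 ≤ length
  blocks_disjoint : ∀ p ∈ blocks, ∀ q ∈ blocks, p ≠ q →
    Set.Ioo p.1 p.2 ∩ Set.Ioo q.1 q.2 = ∅
  compl_null : volume (Set.Icc 0 length \ ⋃ p ∈ blocks, Set.Ioo p.1 p.2) = 0

namespace IntervalPartition

/-- The mass (Lebesgue measure) of a block `(a, b)`. -/
def mass (p : ℝ × ℝ) : ℝ := p.2 - p.1

/-- The complement `C_β = [0, ‖β‖] \ ⋃_{U ∈ β} U`. -/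
def cset (β : IntervalPartition) : Set ℝ :=
  Set.Icc 0 β.length \ ⋃ p ∈ β.blocks, Set.Ioo p.1 p.2

/-- A correspondence between `β` and `γ`: a finite sequence of pairs of blocks,
strictly increasing in the left-to-right order in each coordinate. -/
def IsCorrespondence (β γ : IntervalPartition) (n : ℕ)
    (c : Fin n → (ℝ × ℝ) × (ℝ × ℝ)) : Prop :=
  (∀ j, (c j).1 ∈ β.blocks ∧ (c j).2 ∈ γ.blocks) ∧
  (∀ j k : Fin n, j < k → (c j).1.2 ≤ (c k).1.1 ∧ (c j).2.2 ≤ (c k).2.1)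

/-- The Hausdorff distortion of a correspondence: the maximum of quantities
(i) and (ii) of the paper. -/
noncomputable def hausDistortion (β γ : IntervalPartition) (n : ℕ)
    (c : Fin n → (ℝ × ℝ) × (ℝ × ℝ)) : ℝ :=
  max ((∑ j : Fin n, |mass (c j).1 - mass (c j).2|) + β.length - ∑ j : Fin n, mass (c j).1)
      ((∑ j : Fin n, |mass (c j).1 - mass (c j).2|) + γ.length - ∑ j : Fin n, mass (c j).2)

/-- The metric `d_H'`: infimum of the Hausdorff distortion over all correspondences. -/
noncomputable def dHp (β γ : IntervalPartition) : ℝ :=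
  sInf {x | ∃ n, ∃ c : Fin n → (ℝ × ℝ) × (ℝ × ℝ),
    IsCorrespondence β γ n c ∧ x = hausDistortion β γ n c}

/-- The metric `d_H`: the Hausdorff distance between the complements. -/
noncomputable def dH (β γ : IntervalPartition) : ℝ :=
  Metric.hausdorffDist β.cset γ.cset

/-- The number of blocks of mass `> h` ending at or before `t`. -/
noncomputable def divCount (β : IntervalPartition) (t h : ℝ) : ℕ :=
  Set.ncard {p : ℝ × ℝ | p ∈ β.blocks ∧ h < p.2 - p.1 ∧ p.2 ≤ t}

/-- `β` has `a`-diversity `d` at `t`: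
`Γ(1-a) · lim_{h↓0} h^a · #{(x,y) ∈ β : y - x > h, y ≤ t} = d`. -/
def HasDiversity (a : ℝ) (β : IntervalPartition) (t d : ℝ) : Prop :=
  Tendsto (fun h : ℝ => Real.Gamma (1 - a) * h ^ a * (divCount β t h : ℝ))
    (𝓝[>] 0) (𝓝 d)

/-- The `a`-diversity property: the diversity limit exists at every `t ∈ [0, ‖β‖]`. -/
def HasDiversityProp (a : ℝ) (β : IntervalPartition) : Prop :=
  ∀ t ∈ Set.Icc 0 β.length, ∃ d, HasDiversity a β t d

/-- The diversity function `𝒟_β(t)` (the value of the limit, when it exists). -/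
noncomputable def diversity (a : ℝ) (β : IntervalPartition) (t : ℝ) : ℝ :=
  limUnder (𝓝[>] (0:ℝ)) (fun h : ℝ => Real.Gamma (1 - a) * h ^ a * (divCount β t h : ℝ))

/-- The total diversity `𝒟_β(∞) = 𝒟_β(‖β‖)`. -/
noncomputable def totalDiversity (a : ℝ) (β : IntervalPartition) : ℝ :=
  diversity a β β.length

/-- The diversity `𝒟_β(U)` of a block `U`, evaluated at its midpoint. -/
noncomputable def blockDiversity (a : ℝ) (β : IntervalPartition) (p : ℝ × ℝ) : ℝ :=
  diversity a β ((p.1 + p.2) / 2)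

/-- The `a`-distortion of a correspondence: the maximum of quantities (i)-(iv). -/
noncomputable def alphaDistortion (a : ℝ) (β γ : IntervalPartition) (n : ℕ)
    (c : Fin n → (ℝ × ℝ) × (ℝ × ℝ)) : ℝ :=
  max (hausDistortion β γ n c)
    (max (⨆ j : Fin n, |blockDiversity a β (c j).1 - blockDiversity a γ (c j).2|)
         |totalDiversity a β - totalDiversity a γ|)

/-- The metric `d_α`: infimum of the `a`-distortion over all correspondences. -/
noncomputable def dA (a : ℝ) (β γ : IntervalPartition) : ℝ :=
  sInf {x | ∃ n, ∃ c : Fin n → (ℝ × ℝ) × (ℝ × ℝ),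
    IsCorrespondence β γ n c ∧ x = alphaDistortion a β γ n c}

end IntervalPartition

/-- A point of the space `J`: an interval partition `η` together with an increasing,
right-continuous function `f` that is constant on every block of `η`, on `[‖η‖, ∞)`,
and (as `f` is defined on `[0, ∞]`) on `(-∞, 0]`. -/
structure JPoint where
  part : IntervalPartition
  f : ℝ → ℝ
  f_nonneg : ∀ t, 0 ≤ f t
  f_mono : Monotone f
  f_rightCont : ∀ t, ContinuousWithinAt f (Set.Ici t) t
  f_const_block : ∀ p ∈ part.blocks, ∀ s ∈ Set.Ioo p.1 p.2, ∀ t ∈ Set.Ioo p.1 p.2, f s = f t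
  f_const_top : ∀ t, part.length ≤ t → f t = f part.length
  f_const_neg : ∀ t, t ≤ (0:ℝ) → f t = f 0

/-- The distortion of a correspondence between two points of `J`: as the
`a`-distortion, but with `f`, `g` in place of the diversity functions. -/
noncomputable def jDistortion (x y : JPoint) (n : ℕ)
    (c : Fin n → (ℝ × ℝ) × (ℝ × ℝ)) : ℝ :=
  max (IntervalPartition.hausDistortion x.part y.part n c)
    (max (⨆ j : Fin n, |x.f (((c j).1.1 + (c j).1.2) / 2) - y.f (((c j).2.1 + (c j).2.2) / 2)|)
         |x.f x.part.length - y.f y.part.length|)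

/-- The metric `d_J` on `J`. -/
noncomputable def dJ (x y : JPoint) : ℝ :=
  sInf {r | ∃ n, ∃ c : Fin n → (ℝ × ℝ) × (ℝ × ℝ),
    IntervalPartition.IsCorrespondence x.part y.part n c ∧ r = jDistortion x y n c}

namespace IntervalPartition

/-! ### Upper bounds for the distance -/

lemma dA_le (a : ℝ) (β γ : IntervalPartition) (n : ℕ) (c : Fin n → (ℝ × ℝ) × (ℝ × ℝ))
    (hc : IsCorrespondence β γ n c) : dA a β γ ≤ alphaDistortion a β γ n c := by
  refine csInf_le ⟨0, ?_⟩ ⟨n, c, hc, rfl⟩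
  rintro x ⟨m, d, -, rfl⟩
  exact (abs_nonneg _).trans ((le_max_right _ _).trans (le_max_right _ _))

lemma dA_le_of (a : ℝ) (β γ : IntervalPartition) (n : ℕ) (c d : Fin n → ℝ × ℝ) {e : ℝ}
    (he : 0 ≤ e)
    (hc : ∀ j, c j ∈ β.blocks) (hd : ∀ j, d j ∈ γ.blocks)
    (hcm : ∀ j k, j < k → (c j).2 ≤ (c k).1) (hdm : ∀ j k, j < k → (d j).2 ≤ (d k).1)
    (h1 : (∑ j, |mass (c j) - mass (d j)|) + β.length - ∑ j, mass (c j) ≤ e)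
    (h2 : (∑ j, |mass (c j) - mass (d j)|) + γ.length - ∑ j, mass (d j) ≤ e)
    (h3 : ∀ j, |blockDiversity a β (c j) - blockDiversity a γ (d j)| ≤ e)
    (h4 : |totalDiversity a β - totalDiversity a γ| ≤ e) : dA a β γ ≤ e := by
  refine (dA_le a β γ n (fun j => (c j, d j))
    ⟨fun j => ⟨hc j, hd j⟩, fun j k h => ⟨hcm j k h, hdm j k h⟩⟩).trans ?_
  exact max_le (max_le h1 h2) (max_le (Real.iSup_le h3 he) h4)

/-! ### Finitely many blocks carrying almost all of the mass -/

lemma disjoint_blocks (β : IntervalPartition) :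
    β.blocks.PairwiseDisjoint (fun p => Ioo p.1 p.2) := by
  intro p hp q hq hpq
  exact Set.disjoint_iff_inter_eq_empty.2 (β.blocks_disjoint p hp q hq hpq)

lemma countable_blocks (β : IntervalPartition) : β.blocks.Countable :=
  β.disjoint_blocks.countable_of_isOpen (fun _ _ => isOpen_Ioo)
    (fun p hp => nonempty_Ioo.2 (β.blocks_lt p hp))

lemma snd_le_fst (β : IntervalPartition) {p q : ℝ × ℝ} (hp : p ∈ β.blocks) (hq : q ∈ β.blocks)
    (hne : p ≠ q) (hle : p.1 ≤ q.1) : p.2 ≤ q.1 := by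
  by_contra! hlt
  have h := β.blocks_disjoint p hp q hq hne
  obtain ⟨x, hx, hx'⟩ := exists_between (lt_min hlt (β.blocks_lt q hq))
  have : x ∈ Ioo p.1 p.2 ∩ Ioo q.1 q.2 :=
    ⟨⟨hle.trans_lt hx, hx'.trans_le (min_le_left _ _)⟩, hx, hx'.trans_le (min_le_right _ _)⟩
  simp [h] at this

/-- The blocks carry the whole length, because the rest of `[0, ‖β‖]` is null. -/
lemma exists_finset_blocks (β : IntervalPartition) {e : ℝ} (he : 0 < e) :
    ∃ F : Finset (ℝ × ℝ), (∀ p ∈ F, p ∈ β.blocks) ∧ β.length < ∑ p ∈ F, mass p + e := by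
  have hU : ENNReal.ofReal β.length ≤ ∑' p : β.blocks, ENNReal.ofReal (mass p.1) := by
    have h1 : volume (Icc 0 β.length) ≤ volume (⋃ p ∈ β.blocks, Ioo p.1 p.2) := by
      refine measure_mono_ae ?_
      rw [ae_le_set]
      exact β.compl_null
    rw [measure_biUnion β.countable_blocks β.disjoint_blocks
      (fun _ _ => measurableSet_Ioo)] at h1
    simpa [mass] using h1
  rcases le_or_gt β.length 0 with hL | hL
  · exact ⟨∅, by simp, by simp; linarith⟩
  have hlt : ENNReal.ofReal (β.length - e) < ∑' p : β.blocks, ENNReal.ofReal (mass p.1) :=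
    ((ENNReal.ofReal_lt_ofReal_iff hL).2 (by linarith)).trans_le hU
  obtain ⟨F, hF⟩ := ((ENNReal.summable.hasSum).eventually (lt_mem_nhds hlt)).exists
  refine ⟨F.map (Function.Embedding.subtype _), ?_, ?_⟩
  · simp +contextual
  · have hm : ∀ p ∈ F, 0 ≤ mass p.1 := fun p _ => sub_nonneg.2 (β.blocks_lt p.1 p.2).le
    rw [← ENNReal.ofReal_sum_of_nonneg hm, ENNReal.ofReal_lt_ofReal_iff'] at hF
    simp only [Finset.sum_map, Function.Embedding.subtype_apply]
    linarith [hF.1]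

lemma exists_fin_blocks (β : IntervalPartition) {e : ℝ} (he : 0 < e) :
    ∃ (n : ℕ) (c : Fin n → ℝ × ℝ), (∀ j, c j ∈ β.blocks) ∧
      (∀ j k, j < k → (c j).2 ≤ (c k).1) ∧ β.length - ∑ j, mass (c j) < e := by
  obtain ⟨F, hF, hsum⟩ := β.exists_finset_blocks he
  -- The lexicographic order is linear and agrees with the left-to-right order on blocks.
  let G : Finset (ℝ ×ₗ ℝ) := F.map toLex.toEmbedding
  have hG : ∀ x ∈ G, ofLex x ∈ F := by
    intro x hx
    obtain ⟨y, hy, rfl⟩ := Finset.mem_map.1 hx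
    exact hy
  let φ := G.orderIsoOfFin rfl
  have hφ : ∀ j, ofLex (φ j).1 ∈ β.blocks := fun j => hF _ (hG _ (φ j).2)
  refine ⟨G.card, fun j => ofLex (φ j).1, hφ, ?_, ?_⟩
  · intro j k hjk
    have hlt : (φ j).1 < (φ k).1 := φ.strictMono hjk
    refine β.snd_le_fst (hφ j) (hφ k) (fun h => hlt.ne (ofLex.injective h)) ?_
    rcases Prod.Lex.lt_iff.1 hlt with h | h
    · exact h.le
    · exact h.1.le
  · have : ∑ j, mass (ofLex (φ j).1) = ∑ p ∈ F, mass p := by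
      rw [show ∑ j, mass (ofLex (φ j).1) = ∑ x : G, mass (ofLex x.1) from
          φ.toEquiv.sum_comp (fun x : G => mass (ofLex x.1)),
        Finset.sum_coe_sort G (fun x => mass (ofLex x)), Finset.sum_map]
      rfl
    linarith

/-! ### Scaling -/

/-- The interval partition of `[0, 0]` with no blocks. -/
def empty : IntervalPartition where
  length := 0
  length_nonneg := le_rfl
  blocks := ∅
  blocks_lt := by simp
  blocks_sub := by simp
  blocks_disjoint := by simp
  compl_null := by simp

open Classical in
/-- The dilation of `β` by the factor `c`; by convention the empty partition when `c ≤ 0`. -/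
noncomputable def scale (c : ℝ) (β : IntervalPartition) : IntervalPartition :=
  if hc : 0 < c then
    { length := c * β.length
      length_nonneg := mul_nonneg hc.le β.length_nonneg
      blocks := {q | (q.1 / c, q.2 / c) ∈ β.blocks}
      blocks_lt := fun p hp => (div_lt_div_iff_of_pos_right hc).1 (β.blocks_lt _ hp)
      blocks_sub := fun p hp => by
        have h := β.blocks_sub _ hp
        refine ⟨?_, ?_⟩
        · have := mul_nonneg hc.le h.1
          rwa [mul_div_cancel₀ _ hc.ne'] at this
        · rw [mul_comm]
          exact (div_le_iff₀ hc).1 h.2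
      blocks_disjoint := fun p hp q hq hne => by
        have h := β.blocks_disjoint _ hp _ hq (fun h => hne (by
          have h1 := congrArg Prod.fst h
          have h2 := congrArg Prod.snd h
          simp only [div_left_inj' hc.ne'] at h1 h2
          exact Prod.ext h1 h2))
        rw [Set.eq_empty_iff_forall_notMem] at h ⊢
        rintro x ⟨hx, hx'⟩
        refine h (x / c) ⟨⟨?_, ?_⟩, ?_, ?_⟩ <;> refine (div_lt_div_iff_of_pos_right hc).2 ?_
        exacts [hx.1, hx.2, hx'.1, hx'.2]
      compl_null := by
        have h := Real.volume_preimage_mul_left (inv_ne_zero hc.ne')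
          (Set.Icc 0 β.length \ ⋃ p ∈ β.blocks, Set.Ioo p.1 p.2)
        rw [β.compl_null, mul_zero] at h
        refine measure_mono_null ?_ h
        rintro x ⟨hx, hx'⟩
        rw [mem_preimage, ← div_eq_inv_mul]
        refine ⟨⟨div_nonneg hx.1 hc.le, (div_le_iff₀' hc).2 hx.2⟩, fun hmem => hx' ?_⟩
        simp only [mem_iUnion] at hmem ⊢
        obtain ⟨p, hp, h1, h2⟩ := hmem
        refine ⟨(c * p.1, c * p.2), ?_, (lt_div_iff₀' hc).1 h1, (div_lt_iff₀' hc).1 h2⟩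
        simpa [mul_div_cancel_left₀ _ hc.ne'] using hp }
  else empty

lemma scale_of_nonpos {c : ℝ} (hc : c ≤ 0) (β : IntervalPartition) : scale c β = empty := by
  simp [scale, hc.not_gt]

lemma scale_length {c : ℝ} (hc : 0 ≤ c) (β : IntervalPartition) :
    (scale c β).length = c * β.length := by
  rcases hc.eq_or_lt with rfl | hc
  · simp [scale, empty]
  · simp [scale, hc]

lemma mem_scale_blocks {c : ℝ} (hc : 0 < c) {β : IntervalPartition} {q : ℝ × ℝ} :
    q ∈ (scale c β).blocks ↔ (q.1 / c, q.2 / c) ∈ β.blocks := by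
  simp [scale, hc]

lemma smul_mem_scale_blocks {c : ℝ} (hc : 0 < c) {β : IntervalPartition} {p : ℝ × ℝ} :
    c • p ∈ (scale c β).blocks ↔ p ∈ β.blocks := by
  simp [mem_scale_blocks hc, mul_div_cancel_left₀ _ hc.ne']

lemma scale_one (β : IntervalPartition) : scale 1 β = β := by
  cases β
  simp [scale]

lemma divCount_scale {c : ℝ} (hc : 0 < c) (β : IntervalPartition) (t h : ℝ) :
    divCount (scale c β) (c * t) h = divCount β t (h / c) := by
  unfold divCount
  rw [← Set.ncard_image_of_injective {p | p ∈ β.blocks ∧ h / c < p.2 - p.1 ∧ p.2 ≤ t}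
    (smul_right_injective (ℝ × ℝ) hc.ne')]
  congr 1
  ext q
  obtain ⟨p, rfl⟩ : ∃ p : ℝ × ℝ, q = c • p := ⟨c⁻¹ • q, by rw [smul_inv_smul₀ hc.ne']⟩
  rw [(smul_right_injective (ℝ × ℝ) hc.ne').mem_set_image]
  simp only [mem_ofPred_eq, smul_mem_scale_blocks hc, Prod.smul_fst, Prod.smul_snd, smul_eq_mul,
    ← mul_sub, mul_le_mul_iff_right₀ hc, div_lt_iff₀' hc]

lemma hasDiversity_scale {a c : ℝ} (hc : 0 < c) {β : IntervalPartition} {t d : ℝ}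
    (h : HasDiversity a β t d) : HasDiversity a (scale c β) (c * t) (c ^ a * d) := by
  have hlim : Tendsto (fun h : ℝ => h / c) (𝓝[>] 0) (𝓝[>] 0) := by
    refine tendsto_nhdsWithin_iff.2 ⟨?_, ?_⟩
    · have : Tendsto (fun h : ℝ => h / c) (𝓝 0) (𝓝 (0 / c)) := tendsto_id.div_const c
      rw [zero_div] at this
      exact this.mono_left nhdsWithin_le_nhds
    · filter_upwards [self_mem_nhdsWithin] with x hx
      exact div_pos hx hc
  refine ((h.comp hlim).const_mul (c ^ a)).congr' ?_
  filter_upwards [self_mem_nhdsWithin] with x hx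
  have hx0 : (0 : ℝ) < x := hx
  rw [Function.comp_apply, divCount_scale hc, Real.div_rpow hx0.le hc.le]
  have := (Real.rpow_pos_of_pos hc a).ne'
  field_simp

lemma hasDiversity_empty (a t : ℝ) : HasDiversity a empty t 0 := by
  simp [HasDiversity, divCount, empty]

lemma hasDiversityProp_scale {a : ℝ} (c : ℝ) {β : IntervalPartition}
    (hβ : HasDiversityProp a β) : HasDiversityProp a (scale c β) := by
  rcases le_or_gt c 0 with hc | hc
  · rw [scale_of_nonpos hc]
    exact fun t _ => ⟨0, hasDiversity_empty a t⟩
  · intro t ht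
    rw [scale_length hc.le] at ht
    obtain ⟨d, hd⟩ := hβ (t / c) ⟨div_nonneg ht.1 hc.le, (div_le_iff₀' hc).2 ht.2⟩
    have := hasDiversity_scale hc hd
    rw [mul_div_cancel₀ _ hc.ne'] at this
    exact ⟨_, this⟩

lemma diversity_scale {a c : ℝ} (hc : 0 < c) {β : IntervalPartition}
    (hβ : HasDiversityProp a β) {t : ℝ} (ht : t ∈ Icc 0 β.length) :
    diversity a (scale c β) (c * t) = c ^ a * diversity a β t := by
  obtain ⟨d, hd⟩ := hβ t ht
  rw [diversity, (hasDiversity_scale hc hd).limUnder_eq, diversity, hd.limUnder_eq]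

/-- For `c = 0` both sides vanish, since `0 ^ a = 0` for `a > 0`. -/
lemma totalDiversity_scale {a c : ℝ} (ha : 0 < a) (hc : 0 ≤ c) {β : IntervalPartition}
    (hβ : HasDiversityProp a β) :
    totalDiversity a (scale c β) = c ^ a * totalDiversity a β := by
  rcases hc.eq_or_lt with rfl | hc
  · rw [Real.zero_rpow ha.ne', zero_mul, scale_of_nonpos le_rfl]
    exact (hasDiversity_empty a _).limUnder_eq
  · rw [totalDiversity, scale_length hc.le]
    exact diversity_scale hc hβ ⟨β.length_nonneg, le_rfl⟩

lemma blockDiversity_scale {a c : ℝ} (hc : 0 < c) {β : IntervalPartition}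
    (hβ : HasDiversityProp a β) {p : ℝ × ℝ} (hp : p ∈ β.blocks) :
    blockDiversity a (scale c β) (c • p) = c ^ a * blockDiversity a β p := by
  have h1 := β.blocks_lt p hp
  have h2 := β.blocks_sub p hp
  rw [blockDiversity, blockDiversity, ← diversity_scale hc hβ ⟨by linarith, by linarith⟩]
  simp only [Prod.smul_fst, Prod.smul_snd, smul_eq_mul]
  congr 1
  ring

lemma mass_smul (c : ℝ) (p : ℝ × ℝ) : mass (c • p) = c * mass p := by
  simp [mass, mul_sub]

/-- Dilation is continuous at `t = 0`, where the empty correspondence suffices. -/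
lemma eventually_dA_scale_zero {a : ℝ} (ha : 0 < a) {β : IntervalPartition}
    (hβ : HasDiversityProp a β) {e : ℝ} (he : 0 < e) :
    ∀ᶠ s in 𝓝 (0 : ℝ), 0 ≤ s → dA a (scale s β) (scale 0 β) ≤ e := by
  have h1 : ∀ᶠ s in 𝓝 (0 : ℝ), s * β.length < e :=
    (continuous_id.mul continuous_const).continuousAt.eventually_lt continuousAt_const
      (by simpa using he)
  have h2 : ∀ᶠ s in 𝓝 (0 : ℝ), |s ^ a * totalDiversity a β| < e :=
    ((Real.continuousAt_rpow_const 0 a (Or.inr ha.le)).mul continuousAt_const).abs.eventually_lt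
      continuousAt_const (by simpa [Real.zero_rpow ha.ne'] using he)
  filter_upwards [h1, h2] with s h1 h2 hs
  refine dA_le_of a _ _ 0 Fin.elim0 Fin.elim0 he.le (fun j => j.elim0) (fun j => j.elim0)
    (fun j => j.elim0) (fun j => j.elim0) ?_ ?_ (fun j => j.elim0) ?_
  · simpa [scale_length hs] using h1.le
  · simpa [scale_length le_rfl] using he.le
  · rw [totalDiversity_scale ha hs hβ, totalDiversity_scale ha le_rfl hβ, Real.zero_rpow ha.ne']
    simpa using h2.le

lemma eventually_dA_scale_pos {a : ℝ} (ha : 0 < a) {β : IntervalPartition}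
    (hβ : HasDiversityProp a β) {t : ℝ} (ht : 0 < t) {e : ℝ} (he : 0 < e) :
    ∀ᶠ s in 𝓝 t, dA a (scale s β) (scale t β) ≤ e := by
  obtain ⟨n, c, hc, hcm, hsum⟩ := β.exists_fin_blocks (div_pos he ht)
  rw [lt_div_iff₀' ht] at hsum
  have h1 : ∀ᶠ s in 𝓝 t, |s - t| * (∑ j, mass (c j)) + s * (β.length - ∑ j, mass (c j)) < e :=
    ContinuousAt.eventually_lt (by fun_prop) continuousAt_const (by simpa using hsum)
  have h2 : ∀ᶠ s in 𝓝 t, |s - t| * (∑ j, mass (c j)) + t * (β.length - ∑ j, mass (c j)) < e :=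
    ContinuousAt.eventually_lt (by fun_prop) continuousAt_const (by simpa using hsum)
  have hD : ∀ D : ℝ, ∀ᶠ s in 𝓝 t, |s ^ a * D - t ^ a * D| < e := fun D =>
    (((Real.continuousAt_rpow_const t a (Or.inr ha.le)).mul continuousAt_const).sub
      continuousAt_const).abs.eventually_lt continuousAt_const (by simpa using he)
  have h3 : ∀ᶠ s in 𝓝 t, ∀ j,
      |s ^ a * blockDiversity a β (c j) - t ^ a * blockDiversity a β (c j)| < e :=
    eventually_all.2 fun j => hD _
  filter_upwards [h1, h2, h3, hD (totalDiversity a β), lt_mem_nhds ht] with s h1 h2 h3 h4 hs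
  have hmass : ∑ j, |mass (s • c j) - mass (t • c j)| = |s - t| * ∑ j, mass (c j) := by
    rw [Finset.mul_sum]
    refine Finset.sum_congr rfl fun j _ => ?_
    rw [mass_smul, mass_smul, ← sub_mul, abs_mul,
      abs_of_nonneg (show 0 ≤ mass (c j) from sub_nonneg.2 (β.blocks_lt _ (hc j)).le)]
  refine dA_le_of a _ _ n (fun j => s • c j) (fun j => t • c j) he.le
    (fun j => (smul_mem_scale_blocks hs).2 (hc j)) (fun j => (smul_mem_scale_blocks ht).2 (hc j))
    (fun j k h => mul_le_mul_of_nonneg_left (hcm j k h) hs.le)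
    (fun j k h => mul_le_mul_of_nonneg_left (hcm j k h) ht.le) ?_ ?_ ?_ ?_
  · rw [hmass, scale_length hs.le]
    simp only [mass_smul, ← Finset.mul_sum]
    linarith
  · rw [hmass, scale_length ht.le]
    simp only [mass_smul, ← Finset.mul_sum]
    linarith
  · intro j
    rw [blockDiversity_scale hs hβ (hc j), blockDiversity_scale ht hβ (hc j)]
    exact (h3 j).le
  · rw [totalDiversity_scale ha hs.le hβ, totalDiversity_scale ha ht.le hβ]
    exact h4.le

lemma dA_scale_lt {a : ℝ} (ha : 0 < a) {β : IntervalPartition}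
    (hβ : HasDiversityProp a β) {t : ℝ} (ht : 0 ≤ t) {e : ℝ} (he : 0 < e) :
    ∃ δ, 0 < δ ∧ ∀ s, 0 ≤ s → |s - t| < δ → dA a (scale s β) (scale t β) < e := by
  have h : ∀ᶠ s in 𝓝 t, 0 ≤ s → dA a (scale s β) (scale t β) ≤ e / 2 := by
    rcases ht.eq_or_lt with rfl | ht
    · exact eventually_dA_scale_zero ha hβ (half_pos he)
    · exact (eventually_dA_scale_pos ha hβ ht (half_pos he)).mono fun s hs _ => hs
  obtain ⟨δ, hδ, H⟩ := Metric.eventually_nhds_iff.1 h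
  exact ⟨δ, hδ, fun s hs hst => (H hst hs).trans_lt (half_lt_self he)⟩

/-- The path that shrinks `β` to the empty partition and then expands it to `γ`. -/
noncomputable def path (β γ : IntervalPartition) (t : ℝ) : IntervalPartition :=
  if t ≤ 1 / 2 then scale (1 - 2 * t) β else scale (2 * t - 1) γ

lemma path_of_le (β γ : IntervalPartition) {t : ℝ} (ht : t ≤ 1 / 2) :
    path β γ t = scale (1 - 2 * t) β := if_pos ht

/-- At `t = 1 / 2` both branches are the empty partition. -/
lemma path_of_ge (β γ : IntervalPartition) {t : ℝ} (ht : 1 / 2 ≤ t) :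
    path β γ t = scale (2 * t - 1) γ := by
  rcases ht.eq_or_lt with rfl | ht
  · rw [path_of_le β γ le_rfl, scale_of_nonpos (by norm_num), scale_of_nonpos (by norm_num)]
  · exact if_neg ht.not_ge

lemma dA_path_lt {a : ℝ} (ha : 0 < a) {β γ : IntervalPartition} (hβ : HasDiversityProp a β)
    (hγ : HasDiversityProp a γ) (t : ℝ) {e : ℝ} (he : 0 < e) :
    ∃ δ, 0 < δ ∧ ∀ s, |s - t| < δ → dA a (path β γ s) (path β γ t) < e := by
  -- On each side of `1 / 2`; the hypothesis on `s` is vacuous for `s` near `t` on the wrong side.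
  have hL : ∃ δ, 0 < δ ∧ ∀ s, s ≤ 1 / 2 → |s - t| < δ → dA a (path β γ s) (path β γ t) < e := by
    rcases le_or_gt t (1 / 2) with ht | ht
    · obtain ⟨δ, hδ, H⟩ := dA_scale_lt ha hβ (t := 1 - 2 * t) (by linarith) he
      refine ⟨δ / 2, half_pos hδ, fun s hs hst => ?_⟩
      rw [path_of_le _ _ hs, path_of_le _ _ ht]
      refine H _ (by linarith) ?_
      rw [abs_lt] at hst ⊢
      constructor <;> linarith [hst.1, hst.2]
    · refine ⟨t - 1 / 2, by linarith, fun s hs hst => ?_⟩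
      rw [abs_lt] at hst
      linarith [hst.1]
  have hR : ∃ δ, 0 < δ ∧ ∀ s, 1 / 2 ≤ s → |s - t| < δ → dA a (path β γ s) (path β γ t) < e := by
    rcases le_or_gt (1 / 2) t with ht | ht
    · obtain ⟨δ, hδ, H⟩ := dA_scale_lt ha hγ (t := 2 * t - 1) (by linarith) he
      refine ⟨δ / 2, half_pos hδ, fun s hs hst => ?_⟩
      rw [path_of_ge _ _ hs, path_of_ge _ _ ht]
      refine H _ (by linarith) ?_
      rw [abs_lt] at hst ⊢
      constructor <;> linarith [hst.1, hst.2]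
    · refine ⟨1 / 2 - t, by linarith, fun s hs hst => ?_⟩
      rw [abs_lt] at hst
      linarith [hst.2]
  obtain ⟨δ, hδ, H⟩ := hL
  obtain ⟨δ', hδ', H'⟩ := hR
  refine ⟨min δ δ', lt_min hδ hδ', fun s hs => ?_⟩
  rcases le_total s (1 / 2) with h | h
  · exact H s h (hs.trans_le (min_le_left _ _))
  · exact H' s h (hs.trans_le (min_le_right _ _))

/-! ### Countably many descriptions -/

/-- A description: a number `n` of blocks, rational masses and diversities for each of them, and a
rational total diversity. -/
abbrev Description : Type := (Σ n : ℕ, Fin n → ℚ × ℚ) × ℚ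

/-- `D` describes `β` up to `e`: some `n` blocks of `β`, in left-to-right order, leave out mass less
than `e`, and `D` lists their masses (with error at most `e` in total), their diversities and the
total diversity (with error at most `e` each). -/
def Describes (a e : ℝ) (D : Description) (β : IntervalPartition) : Prop :=
  ∃ c : Fin D.1.1 → ℝ × ℝ, (∀ j, c j ∈ β.blocks) ∧ (∀ j k, j < k → (c j).2 ≤ (c k).1) ∧
    β.length - ∑ j, mass (c j) < e ∧
    ∑ j, |mass (c j) - (D.1.2 j).1| ≤ e ∧
    (∀ j, |blockDiversity a β (c j) - (D.1.2 j).2| ≤ e) ∧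
    |totalDiversity a β - D.2| ≤ e

lemma exists_rat_abs_sub_le (x : ℝ) {e : ℝ} (he : 0 < e) : ∃ q : ℚ, |x - q| ≤ e := by
  obtain ⟨q, h1, h2⟩ := exists_rat_btwn (lt_add_of_pos_right x he)
  exact ⟨q, abs_le.2 ⟨by linarith, by linarith⟩⟩

lemma exists_describes (a : ℝ) {e : ℝ} (he : 0 < e) (β : IntervalPartition) :
    ∃ D, Describes a e D β := by
  obtain ⟨n, c, hc, hcm, hsum⟩ := β.exists_fin_blocks he
  have hn : (0 : ℝ) < n + 1 := by positivity
  choose q hq using fun j => exists_rat_abs_sub_le (mass (c j)) (div_pos he hn)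
  choose r hr using fun j => exists_rat_abs_sub_le (blockDiversity a β (c j)) he
  obtain ⟨R, hR⟩ := exists_rat_abs_sub_le (totalDiversity a β) he
  refine ⟨(⟨n, fun j => (q j, r j)⟩, R), c, hc, hcm, hsum, ?_, hr, hR⟩
  calc ∑ j, |mass (c j) - q j| ≤ ∑ _j : Fin n, e / (n + 1) := Finset.sum_le_sum fun j _ => hq j
    _ = n * (e / (n + 1)) := by simp
    _ ≤ e := by
      rw [mul_div_assoc', div_le_iff₀ hn]
      nlinarith

lemma dA_le_of_describes {a e : ℝ} {D : Description} {β γ : IntervalPartition} (he : 0 < e)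
    (hβ : Describes a e D β) (hγ : Describes a e D γ) : dA a β γ ≤ 3 * e := by
  obtain ⟨c, hc, hcm, hc1, hc2, hc3, hc4⟩ := hβ
  obtain ⟨d, hd, hdm, hd1, hd2, hd3, hd4⟩ := hγ
  have htri : ∀ {x y z : ℝ}, |x - y| ≤ |x - z| + |y - z| := fun {x y z} =>
    (abs_sub_le x z y).trans_eq (by rw [abs_sub_comm z y])
  have hm : ∑ j, |mass (c j) - mass (d j)| ≤ 2 * e := by
    calc ∑ j, |mass (c j) - mass (d j)|
        ≤ ∑ j, (|mass (c j) - (D.1.2 j).1| + |mass (d j) - (D.1.2 j).1|) :=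
          Finset.sum_le_sum fun j _ => htri
      _ ≤ 2 * e := by rw [Finset.sum_add_distrib]; linarith
  refine dA_le_of a β γ _ c d (by linarith) hc hd hcm hdm (by linarith) (by linarith)
    (fun j => ?_) ?_
  · exact htri.trans (by linarith [hc3 j, hd3 j])
  · exact htri.trans (by linarith)

lemma exists_countable_dense (a : ℝ) (P : IntervalPartition → Prop) :
    ∃ S : Set IntervalPartition, S.Countable ∧ (∀ β ∈ S, P β) ∧
      ∀ β, P β → ∀ ε : ℝ, 0 < ε → ∃ γ ∈ S, dA a β γ < ε := by
  classical
  let good : ℕ × Description → IntervalPartition → Prop := fun i β =>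
    P β ∧ Describes a (1 / ((i.1 : ℝ) + 1)) i.2 β
  let rep : ℕ × Description → IntervalPartition := fun i =>
    if h : ∃ β, good i β then h.choose else empty
  have hrep : ∀ i, (∃ β, good i β) → good i (rep i) := by
    intro i h
    simp only [rep, dif_pos h]
    exact h.choose_spec
  refine ⟨rep '' {i | ∃ β, good i β}, (Set.to_countable _).image _, ?_, ?_⟩
  · rintro _ ⟨i, hi, rfl⟩
    exact (hrep i hi).1
  · intro β hβ ε hε
    obtain ⟨k, hk⟩ := exists_nat_one_div_lt (show 0 < ε / 3 by linarith)
    have hk0 : (0 : ℝ) < 1 / ((k : ℝ) + 1) := Nat.one_div_pos_of_nat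
    obtain ⟨D, hD⟩ := exists_describes a hk0 β
    have hi : ∃ β, good (k, D) β := ⟨β, hβ, hD⟩
    refine ⟨rep (k, D), ⟨_, hi, rfl⟩, ?_⟩
    have := dA_le_of_describes hk0 hD (hrep _ hi).2
    linarith

end IntervalPartition

open IntervalPartition in
/-- `(I_α, d_α)` is path-connected (any two points of `I_α` are
joined by a `d_α`-continuous path through `I_α`) and separable (there is a
countable `d_α`-dense subset of `I_α`). -/
theorem dA_pathConnected_separable (a : ℝ) (ha : 0 < a) (ha' : a < 1) :
    (∀ β γ : IntervalPartition, HasDiversityProp a β → HasDiversityProp a γ →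
      ∃ p : ℝ → IntervalPartition,
        (∀ t ∈ Set.Icc (0:ℝ) 1, HasDiversityProp a (p t)) ∧
        p 0 = β ∧ p 1 = γ ∧
        (∀ t ∈ Set.Icc (0:ℝ) 1, ∀ ε : ℝ, 0 < ε → ∃ δ : ℝ, 0 < δ ∧
          ∀ s ∈ Set.Icc (0:ℝ) 1, |s - t| < δ → dA a (p s) (p t) < ε)) ∧
    (∃ S : Set IntervalPartition, S.Countable ∧ (∀ β ∈ S, HasDiversityProp a β) ∧
      ∀ β : IntervalPartition, HasDiversityProp a β → ∀ ε : ℝ, 0 < ε →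
        ∃ γ ∈ S, dA a β γ < ε) := by
  refine ⟨fun β γ hβ hγ => ⟨path β γ, ?_, ?_, ?_, ?_⟩, exists_countable_dense a _⟩
  · intro t _
    unfold path
    split_ifs
    exacts [hasDiversityProp_scale _ hβ, hasDiversityProp_scale _ hγ]
  · rw [path_of_le _ _ (by norm_num)]
    simpa using scale_one β
  · rw [path_of_ge _ _ (by norm_num)]
    norm_num [scale_one γ]
  · intro t _ ε hε
    obtain ⟨δ, hδ, H⟩ := dA_path_lt ha hβ hγ t hε
    exact ⟨δ, hδ, fun s _ hst => H s hst⟩
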